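/- The expected number of (RVarLift)-redexes in a uniformly random λυ-term of size n satisfies E(X_n)/n → 1/384, where an (RVarLift)-redex is a subterm of the form (succ m)[⇑(s)]. -/

import Mathlib

open Finset Filter

mutual
inductive Tm : Type
  | idx : Nat → Tm
  | lam : Tm → Tm
  | app : Tm → Tm → Tm
  | clos : Tm → Subst → Tm
inductive Subst : Type
  | slash : Tm → Subst
  | lift : Subst → Subst
  | shift : Subst
end

mutual
/-- Natural size of a λυ-term: every constructor weighs 1; index n has size n+1. -/
def Tm.size : Tm → Nat
  | .idx n => n + 1
  | .lam a => Tm.size a + 1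
  | .app a b => Tm.size a + Tm.size b + 1
  | .clos a s => Tm.size a + Subst.size s + 1
/-- Natural size of an explicit substitution. -/
def Subst.size : Subst → Nat
  | .slash a => Tm.size a + 1
  | .lift s => Subst.size s + 1
  | .shift => 1
end

/-- Number of λυ-terms of size `n`. -/
noncomputable def tcount (n : ℕ) : ℕ := Nat.card {a : Tm // Tm.size a = n}

/-- Number of explicit substitutions of size `n`. -/
noncomputable def scount (n : ℕ) : ℕ := Nat.card {s : Subst // Subst.size s = n}

/-- Expected value of the statistic `f` on a uniformly random λυ-term of size `n`
(the statistic is assumed to be bounded by the size, so summing `k` up to `n` suffices). -/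
noncomputable def expectTm (f : Tm → ℕ) (n : ℕ) : ℝ :=
  (∑ k ∈ Finset.range (n + 1),
      (k : ℝ) * (Nat.card {a : Tm // Tm.size a = n ∧ f a = k} : ℝ)) / (tcount n : ℝ)

mutual
/-- Number of (rvarLift)-redexes occurring in a λυ-term. -/
def Tm.rvarLiftCount : Tm → ℕ
  | .idx _ => 0
  | .lam a => Tm.rvarLiftCount a
  | .app a b => Tm.rvarLiftCount a + Tm.rvarLiftCount b
  | .clos (.idx (_ + 1)) (.lift s) => Subst.rvarLiftCount s + 1
  | .clos a s => Tm.rvarLiftCount a + Subst.rvarLiftCount s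
/-- Number of (rvarLift)-redexes occurring in a substitution. -/
def Subst.rvarLiftCount : Subst → ℕ
  | .slash a => Tm.rvarLiftCount a
  | .lift s => Subst.rvarLiftCount s
  | .shift => 0
end

/-!
Let `T` and `S` count λυ-terms and substitutions by size, and let `R` and `Q` count them weighted by
their number of (RVarLift)-redexes. The grammar gives `T = X (1 / (1 - X) + T + T² + T S)` and
`S = X (T + S + 1)`; eliminating `S` leaves `T = X (1 + T)²`, so `C = 1 + T` is the Catalan series.
Since the number of redexes is additive except for the extra redex at the root of `(succ m)[⇑(s)]`,
which contributes `X · X² / (1 - X) · X S`, the series `R` and `Q` solve a linear system, whose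
elimination gives `(1 - X) (1 - 2 X C) R = X⁵ C`. Differentiating `X C = X + (X C)²` identifies
`1 / (1 - 2 X C)` with the series of the central binomial coefficients `b n`, so the terms of
size `n` contain `(b 1 + ⋯ + b (n - 4)) / 2` redexes in total. As `b (n + 1) / b n → 4`, this sum is
asymptotic to `(1 / 3) b (n - 3) ~ (1 / 3) 4⁻³ b n`, while there are `b n / (n + 1)` terms of
size `n`; hence the limit `(1 / 2) (1 / 3) 4⁻³ = 1 / 384`.
-/

open PowerSeries

section WeightSeries

variable {α β R : Type*}

/-- The size function `s` makes `α` a combinatorial class: there are finitely many objects of each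
size. -/
def FiniteFibers (s : α → ℕ) : Prop := ∀ n, (s ⁻¹' {n}).Finite

theorem FiniteFibers.comp_injective {s : β → ℕ} (hs : FiniteFibers s) {f : α → β}
    (hf : f.Injective) : FiniteFibers (s ∘ f) :=
  fun n => Set.Finite.preimage (f := f) hf.injOn (hs n)

theorem FiniteFibers.prod {s : α → ℕ} {t : β → ℕ} (hs : FiniteFibers s) (ht : FiniteFibers t) :
    FiniteFibers fun p : α × β => s p.1 + t p.2 := by
  intro n
  have hs_le : (s ⁻¹' Set.Iic n).Finite := (Set.finite_Iic n).preimage' fun i _ => hs i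
  have ht_le : (t ⁻¹' Set.Iic n).Finite := (Set.finite_Iic n).preimage' fun i _ => ht i
  refine (hs_le.prod ht_le).subset ?_
  rintro ⟨a, b⟩ (h : s a + t b = n)
  exact ⟨Nat.le.intro h, Nat.le.intro ((add_comm _ _).trans h)⟩

/-- The weighted ordinary generating function `∑ₐ w(a) X ^ s(a)` of a combinatorial class with size
function `s`; constant weight `1` gives the counting series. It is meaningful when `s` has finite
fibers, since `finsum` is zero on sums of infinite support. -/
noncomputable def weightSeries [Semiring R] (s : α → ℕ) (w : α → R) : R⟦X⟧ :=
  PowerSeries.mk fun n => ∑ᶠ a ∈ s ⁻¹' {n}, w a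

variable [Semiring R]

theorem coeff_weightSeries_eq_sum {s : α → ℕ} {n : ℕ} {F : Finset α}
    (hF : ∀ a, a ∈ F ↔ s a = n) (w : α → R) :
    coeff n (weightSeries s w) = ∑ a ∈ F, w a := by
  have hfiber : s ⁻¹' {n} = F := Set.ext fun a => (hF a).symm
  rw [weightSeries, coeff_mk, hfiber, finsum_mem_coe_finset]

theorem weightSeries_comp_equiv (e : α ≃ β) (s : β → ℕ) (w : β → R) :
    weightSeries (s ∘ e) (w ∘ e) = weightSeries s w := by
  ext n
  simp only [weightSeries, coeff_mk]
  exact finsum_comp_equiv e (f := fun b => ∑ᶠ _ : b ∈ s ⁻¹' {n}, w b)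

theorem weightSeries_size_succ (s : α → ℕ) (w : α → R) :
    weightSeries (fun a => s a + 1) w = X * weightSeries s w := by
  ext n
  cases n with
  | zero => simp [weightSeries]
  | succ n => simp [coeff_succ_X_mul, weightSeries]

theorem weightSeries_zero (s : α → ℕ) : weightSeries s (fun _ => (0 : R)) = 0 := by
  ext n
  simp [weightSeries]

theorem weightSeries_add {s : α → ℕ} (hs : FiniteFibers s) (u v : α → R) :
    weightSeries s (fun a => u a + v a) = weightSeries s u + weightSeries s v := by
  ext n
  simp only [weightSeries, map_add, coeff_mk]
  exact finsum_mem_add_distrib (hs n)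

theorem weightSeries_sum {s : α ⊕ β → ℕ} (hs : FiniteFibers s) (w : α ⊕ β → R) :
    weightSeries s w =
      weightSeries (s ∘ Sum.inl) (w ∘ Sum.inl) + weightSeries (s ∘ Sum.inr) (w ∘ Sum.inr) := by
  ext n
  let F := (hs n).toFinset
  have hF : ∀ x, x ∈ F ↔ s x = n := fun x => (hs n).mem_toFinset
  rw [map_add, coeff_weightSeries_eq_sum hF,
    coeff_weightSeries_eq_sum (s := s ∘ Sum.inl) fun a => mem_toLeft.trans (hF (.inl a)),
    coeff_weightSeries_eq_sum (s := s ∘ Sum.inr) fun b => mem_toRight.trans (hF (.inr b))]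
  exact sum_sum_eq_sum_toLeft_add_sum_toRight F w

open Classical in
theorem weightSeries_prod {s : α → ℕ} {t : β → ℕ} (hs : FiniteFibers s) (ht : FiniteFibers t)
    (u : α → R) (v : β → R) :
    weightSeries (fun p : α × β => s p.1 + t p.2) (fun p => u p.1 * v p.2) =
      weightSeries s u * weightSeries t v := by
  ext n
  have hS : ∀ i a, a ∈ (hs i).toFinset ↔ s a = i := fun i _ => (hs i).mem_toFinset
  have hT : ∀ j b, b ∈ (ht j).toFinset ↔ t b = j := fun j _ => (ht j).mem_toFinset
  have hF : ∀ p : α × β, p ∈ (antidiagonal n).biUnion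
      (fun ij => (hs ij.1).toFinset ×ˢ (ht ij.2).toFinset) ↔ s p.1 + t p.2 = n := by
    simp [hS, hT]
  rw [coeff_weightSeries_eq_sum hF, coeff_mul, sum_biUnion]
  · refine sum_congr rfl fun ij _ => ?_
    rw [sum_product, coeff_weightSeries_eq_sum (hS ij.1), coeff_weightSeries_eq_sum (hT ij.2),
      sum_mul_sum]
  · intro ij _ kl _ hne
    refine Finset.disjoint_left.2 fun p hp hp' => hne ?_
    simp only [mem_product, hS, hT] at hp hp'
    exact Prod.ext (hp.1.symm.trans hp'.1) (hp.2.symm.trans hp'.2)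

theorem weightSeries_prod_add {s : α → ℕ} {t : β → ℕ} (hs : FiniteFibers s) (ht : FiniteFibers t)
    (u : α → R) (v : β → R) :
    weightSeries (fun p : α × β => s p.1 + t p.2) (fun p => u p.1 + v p.2) =
      weightSeries s u * weightSeries t (fun _ => 1) +
        weightSeries s (fun _ => 1) * weightSeries t v := by
  rw [← weightSeries_prod hs ht, ← weightSeries_prod hs ht, ← weightSeries_add (hs.prod ht)]
  simp only [mul_one, one_mul]

theorem weightSeries_id (w : ℕ → R) : weightSeries id w = PowerSeries.mk w := by
  ext n
  simp [weightSeries]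

theorem weightSeries_zero_of_unique [Unique α] (w : α → R) :
    weightSeries (fun _ => 0) w = C (w default) := by
  ext n
  cases n <;> simp [weightSeries, coeff_C, finsum_unique]

end WeightSeries

theorem finite_size_lt (n : ℕ) :
    {a : Tm | a.size < n}.Finite ∧ {s : Subst | s.size < n}.Finite := by
  induction n with
  | zero => simp
  | succ n ih =>
    obtain ⟨hT, hS⟩ := ih
    constructor
    · refine (((Set.finite_Iio (n + 1)).image Tm.idx).union <| (hT.image Tm.lam).union <|
        (hT.image2 Tm.app hT).union (hT.image2 Tm.clos hS)).subset ?_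
      rintro (k | a | ⟨a, b⟩ | ⟨a, s⟩) h <;> grind [Tm.size]
    · refine ((hT.image Subst.slash).union <| (hS.image Subst.lift).union <|
        Set.finite_singleton Subst.shift).subset ?_
      rintro (a | s | _) h <;> grind [Subst.size]

theorem Tm.finiteFibers_size : FiniteFibers Tm.size :=
  fun n => (finite_size_lt (n + 1)).1.subset fun _ h => Nat.lt_succ_of_le (le_of_eq h)

theorem Subst.finiteFibers_size : FiniteFibers Subst.size :=
  fun n => (finite_size_lt (n + 1)).2.subset fun _ h => Nat.lt_succ_of_le (le_of_eq h)

/-- The grammar of λυ-terms, as a bijection onto `Tm` from the disjoint union of the arguments of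
its constructors. -/
def Tm.ofSum : ((ℕ ⊕ Tm) ⊕ Tm × Tm) ⊕ Tm × Subst ≃ Tm where
  toFun
    | .inl (.inl (.inl n)) => .idx n
    | .inl (.inl (.inr a)) => .lam a
    | .inl (.inr (a, b)) => .app a b
    | .inr (a, s) => .clos a s
  invFun
    | .idx n => .inl (.inl (.inl n))
    | .lam a => .inl (.inl (.inr a))
    | .app a b => .inl (.inr (a, b))
    | .clos a s => .inr (a, s)
  left_inv := by rintro (((_ | _) | _) | _) <;> rfl
  right_inv := by rintro (_ | _ | _ | _) <;> rfl

/-- The grammar of explicit substitutions, as a bijection onto `Subst` from the disjoint union of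
the arguments of its constructors. -/
def Subst.ofSum : (Tm ⊕ Subst) ⊕ Unit ≃ Subst where
  toFun
    | .inl (.inl a) => .slash a
    | .inl (.inr s) => .lift s
    | .inr _ => .shift
  invFun
    | .slash a => .inl (.inl a)
    | .lift s => .inl (.inr s)
    | .shift => .inr ()
  left_inv := by rintro ((_ | _) | _) <;> rfl
  right_inv := by rintro (_ | _ | _) <;> rfl

section Grammar

variable {R : Type*} [Semiring R]

theorem Tm.weightSeries_eq (w : Tm → R) :
    weightSeries Tm.size w = X * (PowerSeries.mk (fun n => w (.idx n)) +
      weightSeries Tm.size (fun a => w (.lam a)) +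
      weightSeries (fun p : Tm × Tm => p.1.size + p.2.size) (fun p => w (.app p.1 p.2)) +
      weightSeries (fun p : Tm × Subst => p.1.size + p.2.size) (fun p => w (.clos p.1 p.2))) := by
  have hfin := Tm.finiteFibers_size.comp_injective Tm.ofSum.injective
  have hfin' := hfin.comp_injective Sum.inl_injective
  rw [← weightSeries_comp_equiv Tm.ofSum, weightSeries_sum hfin, weightSeries_sum hfin',
    weightSeries_sum (hfin'.comp_injective Sum.inl_injective), ← weightSeries_id]
  simp only [mul_add, ← weightSeries_size_succ]
  rfl

theorem Subst.weightSeries_eq (w : Subst → R) :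
    weightSeries Subst.size w = X * (weightSeries Tm.size (fun a => w (.slash a)) +
      weightSeries Subst.size (fun s => w (.lift s)) + C (w .shift)) := by
  have hfin := Subst.finiteFibers_size.comp_injective Subst.ofSum.injective
  rw [← weightSeries_comp_equiv Subst.ofSum, weightSeries_sum hfin,
    weightSeries_sum (hfin.comp_injective Sum.inl_injective),
    ← weightSeries_zero_of_unique (fun _ : Unit => w .shift)]
  simp only [mul_add, ← weightSeries_size_succ]
  rfl

end Grammar

section Catalan

theorem eq_map_catalanSeries {R : Type*} [CommRing R] {F : R⟦X⟧} (hF : F = 1 + X * F ^ 2) :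
    F = catalanSeries.map (Nat.castRingHom R) := by
  set K := catalanSeries.map (Nat.castRingHom R)
  have hK : K = 1 + X * K ^ 2 := by
    have h := congrArg (PowerSeries.map (Nat.castRingHom R)) catalanSeries_sq_mul_X_add_one
    simp only [map_add, map_mul, map_pow, map_X, map_one] at h
    linear_combination -h
  have hunit : IsUnit (1 - X * (F + K)) := isUnit_iff_constantCoeff.2 (by simp)
  refine sub_eq_zero.1 (hunit.mul_left_eq_zero.1 ?_)
  linear_combination hF - hK

/-- The generating function of the central binomial coefficients, that is `1 / √(1 - 4X)`. -/
def centralBinomSeries : ℕ⟦X⟧ := PowerSeries.mk Nat.centralBinom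

theorem derivative_X_mul_catalanSeries :
    derivative ℕ (X * catalanSeries) = centralBinomSeries := by
  ext n
  rw [coeff_derivative, coeff_succ_X_mul, catalanSeries_coeff, centralBinomSeries, coeff_mk,
    ← succ_mul_catalan_eq_centralBinom, mul_comm, Nat.cast_id]

theorem centralBinomSeries_eq :
    centralBinomSeries = 1 + 2 * (X * catalanSeries) * centralBinomSeries := by
  have hquad : X * catalanSeries = X + (X * catalanSeries) * (X * catalanSeries) := by
    conv_lhs => rw [← catalanSeries_sq_mul_X_add_one]
    ring
  have hderiv := congrArg (derivative ℕ) hquad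
  rw [map_add, Derivation.leibniz _ (X * catalanSeries) (X * catalanSeries),
    derivative_X_mul_catalanSeries, derivative_X] at hderiv
  refine hderiv.trans ?_
  simp only [smul_eq_mul]
  ring

end Catalan

section Counting

/-- The counting series `T` of λυ-terms. -/
noncomputable def termSeries : ℝ⟦X⟧ := weightSeries Tm.size fun _ => 1

/-- The counting series `S` of explicit substitutions. -/
noncomputable def substSeries : ℝ⟦X⟧ := weightSeries Subst.size fun _ => 1

theorem termSeries_eq :
    termSeries = X * (PowerSeries.mk (fun _ => 1) + termSeries + termSeries * termSeries +
      termSeries * substSeries) := by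
  unfold termSeries substSeries
  rw [← weightSeries_prod Tm.finiteFibers_size Tm.finiteFibers_size,
    ← weightSeries_prod Tm.finiteFibers_size Subst.finiteFibers_size]
  simpa only [mul_one] using Tm.weightSeries_eq fun _ => (1 : ℝ)

theorem substSeries_eq : substSeries = X * (termSeries + substSeries + 1) := by
  simpa only [map_one] using! Subst.weightSeries_eq fun _ => (1 : ℝ)

theorem termSeries_eq_X_mul_sq : termSeries = X * (1 + termSeries) ^ 2 := by
  linear_combination (1 - X : ℝ⟦X⟧) * termSeries_eq + X * mk_one_mul_one_sub_eq_one ℝ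
    + X * termSeries * substSeries_eq

theorem one_add_termSeries_eq : 1 + termSeries = catalanSeries.map (Nat.castRingHom ℝ) :=
  eq_map_catalanSeries (congrArg (1 + ·) termSeries_eq_X_mul_sq)

theorem coeff_termSeries {n : ℕ} (hn : n ≠ 0) : coeff n termSeries = (catalan n : ℝ) := by
  simpa [coeff_one, hn] using congrArg (coeff n) one_add_termSeries_eq

end Counting

section Redexes

/-- The indicator of the indices `succ m`, the left components of (RVarLift)-redexes. -/
def Tm.succIndicator : Tm → ℕ
  | .idx (_ + 1) => 1
  | _ => 0

/-- The indicator of the substitutions `⇑(s)`, the right components of (RVarLift)-redexes. -/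
def Subst.liftIndicator : Subst → ℕ
  | .lift _ => 1
  | _ => 0

theorem Tm.rvarLiftCount_clos (a : Tm) (s : Subst) :
    (Tm.clos a s).rvarLiftCount =
      a.rvarLiftCount + s.rvarLiftCount + a.succIndicator * s.liftIndicator := by
  rcases a with (_ | k) | a | a | a <;> rcases s with a | s | _ <;>
    simp [Tm.rvarLiftCount, Subst.rvarLiftCount, Tm.succIndicator, Subst.liftIndicator]

theorem Tm.rvarLiftCount_clos_le (a : Tm) (s : Subst) :
    (Tm.clos a s).rvarLiftCount ≤ a.rvarLiftCount + s.rvarLiftCount + 1 := by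
  have ha : a.succIndicator ≤ 1 := by unfold Tm.succIndicator; split <;> simp
  have hs : s.liftIndicator ≤ 1 := by unfold Subst.liftIndicator; split <;> simp
  rw [Tm.rvarLiftCount_clos]
  gcongr
  exact Nat.mul_le_mul ha hs

mutual
theorem Tm.rvarLiftCount_le_size : ∀ a : Tm, a.rvarLiftCount ≤ a.size
  | .idx _ => by simp only [Tm.rvarLiftCount, Nat.zero_le]
  | .lam a => by
    have ha := a.rvarLiftCount_le_size
    simp only [Tm.rvarLiftCount, Tm.size]; omega
  | .app a b => by
    have ha := a.rvarLiftCount_le_size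
    have hb := b.rvarLiftCount_le_size
    simp only [Tm.rvarLiftCount, Tm.size]; omega
  | .clos a s => by
    have ha := a.rvarLiftCount_le_size
    have hs := s.rvarLiftCount_le_size
    have has := Tm.rvarLiftCount_clos_le a s
    simp only [Tm.size]; omega
theorem Subst.rvarLiftCount_le_size : ∀ s : Subst, s.rvarLiftCount ≤ s.size
  | .slash a => by
    have ha := a.rvarLiftCount_le_size
    simp only [Subst.rvarLiftCount, Subst.size]; omega
  | .lift s => by
    have hs := s.rvarLiftCount_le_size
    simp only [Subst.rvarLiftCount, Subst.size]; omega
  | .shift => by simp only [Subst.rvarLiftCount, Nat.zero_le]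
end

/-- The series `R = ∑ₐ r(a) X ^ |a|` over λυ-terms, where `r` counts the (RVarLift)-redexes: its
`n`-th coefficient is the total number of redexes in the terms of size `n`. -/
noncomputable def termRedexSeries : ℝ⟦X⟧ :=
  weightSeries Tm.size fun a => (a.rvarLiftCount : ℝ)

/-- The analogue of `termRedexSeries` for explicit substitutions. -/
noncomputable def substRedexSeries : ℝ⟦X⟧ :=
  weightSeries Subst.size fun s => (s.rvarLiftCount : ℝ)

theorem weightSeries_succIndicator :
    weightSeries Tm.size (fun a => (a.succIndicator : ℝ)) =
      X * (X * PowerSeries.mk fun _ => 1) := by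
  have hidx : PowerSeries.mk (fun n => ((Tm.idx n).succIndicator : ℝ)) =
      X * PowerSeries.mk fun _ => 1 := by
    ext n
    cases n <;> simp [Tm.succIndicator, coeff_succ_X_mul]
  rw [Tm.weightSeries_eq, hidx]
  simp [Tm.succIndicator, weightSeries_zero]

theorem weightSeries_liftIndicator :
    weightSeries Subst.size (fun s => (s.liftIndicator : ℝ)) = X * substSeries := by
  rw [Subst.weightSeries_eq]
  simp [Subst.liftIndicator, weightSeries_zero, substSeries]

theorem substRedexSeries_eq : substRedexSeries = X * (termRedexSeries + substRedexSeries) := by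
  simpa [Subst.rvarLiftCount] using! Subst.weightSeries_eq fun s => (s.rvarLiftCount : ℝ)

theorem weightSeries_rvarLiftCount_app :
    weightSeries (fun p : Tm × Tm => p.1.size + p.2.size)
        (fun p => ((Tm.app p.1 p.2).rvarLiftCount : ℝ)) =
      termRedexSeries * termSeries + termSeries * termRedexSeries := by
  simp only [Tm.rvarLiftCount, Nat.cast_add]
  exact weightSeries_prod_add Tm.finiteFibers_size Tm.finiteFibers_size
    (fun a => (a.rvarLiftCount : ℝ)) fun a => (a.rvarLiftCount : ℝ)

theorem weightSeries_rvarLiftCount_clos :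
    weightSeries (fun p : Tm × Subst => p.1.size + p.2.size)
        (fun p => ((Tm.clos p.1 p.2).rvarLiftCount : ℝ)) =
      termRedexSeries * substSeries + termSeries * substRedexSeries +
        X ^ 3 * PowerSeries.mk (fun _ => 1) * substSeries := by
  have hT := Tm.finiteFibers_size
  have hS := Subst.finiteFibers_size
  simp only [Tm.rvarLiftCount_clos, Nat.cast_add, Nat.cast_mul]
  rw [weightSeries_add (hT.prod hS),
    weightSeries_prod_add hT hS (fun a => (a.rvarLiftCount : ℝ)) fun s => (s.rvarLiftCount : ℝ),
    weightSeries_prod hT hS (fun a => (a.succIndicator : ℝ)) fun s => (s.liftIndicator : ℝ),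
    weightSeries_succIndicator, weightSeries_liftIndicator]
  simp only [termRedexSeries, termSeries, substRedexSeries, substSeries]
  ring

theorem termRedexSeries_eq :
    termRedexSeries = X * (termRedexSeries +
      (termRedexSeries * termSeries + termSeries * termRedexSeries) +
      (termRedexSeries * substSeries + termSeries * substRedexSeries +
        X ^ 3 * PowerSeries.mk (fun _ => 1) * substSeries)) := by
  rw [← weightSeries_rvarLiftCount_app, ← weightSeries_rvarLiftCount_clos]
  refine (Tm.weightSeries_eq _).trans ?_
  simp only [Tm.rvarLiftCount, Nat.cast_zero]
  have hzero : (PowerSeries.mk fun _ => (0 : ℝ)) = 0 := rfl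
  rw [hzero, zero_add]
  rfl

theorem termRedexSeries_mul_eq :
    termRedexSeries * (1 - 2 * (X * (1 + termSeries))) * (1 - X) = X ^ 5 * (1 + termSeries) := by
  linear_combination (1 - X : ℝ⟦X⟧) ^ 2 * termRedexSeries_eq
    + (1 - X) * X * termRedexSeries * substSeries_eq
    + (1 - X) * X * termSeries * substRedexSeries_eq
    + X ^ 4 * substSeries * (1 - X) * mk_one_mul_one_sub_eq_one ℝ + X ^ 4 * substSeries_eq

theorem two_mul_termRedexSeries_eq :
    2 * termRedexSeries =
      X ^ 4 * ((centralBinomSeries.map (Nat.castRingHom ℝ) - 1) * PowerSeries.mk fun _ => 1) := by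
  have hD := congrArg (PowerSeries.map (Nat.castRingHom ℝ)) centralBinomSeries_eq
  simp only [map_add, map_mul, map_one, map_X, map_ofNat, ← one_add_termSeries_eq] at hD
  set D := centralBinomSeries.map (Nat.castRingHom ℝ)
  have hmul : 2 * termRedexSeries * (1 - X) = X ^ 4 * (D - 1) := by
    linear_combination 2 * D * termRedexSeries_mul_eq
      + (-2 * termRedexSeries * (1 - X) - X ^ 4) * hD
  linear_combination (PowerSeries.mk fun _ => (1 : ℝ)) * hmul
    - 2 * termRedexSeries * mk_one_mul_one_sub_eq_one ℝ

theorem coeff_termRedexSeries (m : ℕ) :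
    coeff (m + 4) termRedexSeries = (∑ k ∈ range m, ((k + 1).centralBinom : ℝ)) / 2 := by
  have htwo : coeff (m + 4) (2 * termRedexSeries) = 2 * coeff (m + 4) termRedexSeries := by
    rw [two_mul, map_add, ← two_mul]
  rw [eq_div_iff two_ne_zero, mul_comm, ← htwo, two_mul_termRedexSeries_eq, coeff_X_pow_mul,
    coeff_mul, Nat.sum_antidiagonal_eq_sum_range_succ_mk, sum_range_succ']
  simp [centralBinomSeries, coeff_one, -coeff_zero_eq_constantCoeff]

end Redexes

section Expectation

theorem cast_tcount (n : ℕ) : (tcount n : ℝ) = coeff n termSeries := by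
  have hF : ∀ a, a ∈ (Tm.finiteFibers_size n).toFinset ↔ a.size = n :=
    fun _ => (Tm.finiteFibers_size n).mem_toFinset
  rw [termSeries, coeff_weightSeries_eq_sum hF, tcount, Nat.subtype_card _ hF, sum_const,
    nsmul_one]

theorem expectTm_eq_coeff_div {f : Tm → ℕ} (hf : ∀ a, f a ≤ a.size) (n : ℕ) :
    expectTm f n =
      coeff n (weightSeries Tm.size fun a => (f a : ℝ)) / coeff n termSeries := by
  set F := (Tm.finiteFibers_size n).toFinset
  have hF : ∀ a, a ∈ F ↔ a.size = n := fun _ => (Tm.finiteFibers_size n).mem_toFinset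
  have hmaps : ∀ a ∈ F, f a ∈ range (n + 1) := fun a ha =>
    mem_range_succ_iff.2 ((hf a).trans_eq ((hF a).1 ha))
  rw [expectTm, cast_tcount, coeff_weightSeries_eq_sum hF,
    ← sum_fiberwise_of_maps_to' hmaps fun k => (k : ℝ)]
  congr 1
  refine sum_congr rfl fun k _ => ?_
  rw [Nat.subtype_card (F.filter fun a => f a = k) fun a => by rw [mem_filter, hF], sum_const,
    nsmul_eq_mul, mul_comm]

theorem expectTm_rvarLiftCount (m : ℕ) :
    expectTm Tm.rvarLiftCount (m + 4) =
      (m + 5) / 2 * ((∑ k ∈ range m, ((k + 1).centralBinom : ℝ)) / (m + 4).centralBinom) := by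
  have hcatalan : ((m : ℝ) + 5) * catalan (m + 4) = (m + 4).centralBinom :=
    mod_cast succ_mul_catalan_eq_centralBinom (m + 4)
  rw [expectTm_eq_coeff_div Tm.rvarLiftCount_le_size, coeff_termSeries (by omega),
    ← termRedexSeries, coeff_termRedexSeries, ← hcatalan]
  field_simp

end Expectation

section Asymptotics

theorem tendsto_sum_range_div_of_tendsto_ratio {a : ℕ → ℝ} {q : ℝ} (ha : ∀ n, 0 < a n)
    (hq : 1 < q) (hratio : Tendsto (fun n => a (n + 1) / a n) atTop (nhds q)) :
    Tendsto (fun n => (∑ k ∈ range n, a k) / a n) atTop (nhds (q - 1)⁻¹) := by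
  set S : ℕ → ℝ := fun n => ∑ k ∈ range n, a k
  have hS : Tendsto S atTop atTop := by
    refine (not_summable_iff_tendsto_nat_atTop_of_nonneg fun n => (ha n).le).1
      (not_summable_of_ratio_test_tendsto_gt_one hq ?_)
    simpa only [Real.norm_of_nonneg (ha _).le] using hratio
  have hdiff : (fun n => a (n + 1) - a n - (q - 1) * a n) =o[atTop] a := by
    refine (Asymptotics.isLittleO_iff_tendsto fun n h => absurd h (ha n).ne').2 ?_
    have h := hratio.sub_const q
    rw [sub_self] at h
    refine h.congr fun n => ?_
    have han : a n ≠ 0 := (ha n).ne'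
    field_simp
    ring
  have hsum : (fun n => a n - a 0 - (q - 1) * S n) =o[atTop] S := by
    refine (hdiff.sum_range (fun n => (ha n).le) hS).congr_left fun n => ?_
    rw [sum_sub_distrib, sum_range_sub, ← mul_sum]
  have hconst : (fun _ => a 0) =o[atTop] S :=
    Asymptotics.isLittleO_const_left.2 (.inr <| tendsto_norm_atTop_atTop.comp hS)
  have hlim : Tendsto (fun n => a n / S n) atTop (nhds (q - 1)) := by
    have h := ((hsum.add hconst).tendsto_div_nhds_zero).add_const (q - 1)
    rw [zero_add] at h
    refine h.congr' ?_
    filter_upwards [hS.eventually_gt_atTop 0] with n hn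
    field_simp
    ring
  simpa only [inv_div] using hlim.inv₀ (sub_pos.2 hq).ne'

theorem tendsto_div_of_tendsto_ratio {𝕜 : Type*} [Field 𝕜] [TopologicalSpace 𝕜] [ContinuousMul 𝕜]
    {a : ℕ → 𝕜} {q : 𝕜} (ha : ∀ n, a n ≠ 0)
    (hratio : Tendsto (fun n => a (n + 1) / a n) atTop (nhds q)) (j : ℕ) :
    Tendsto (fun n => a (n + j) / a n) atTop (nhds (q ^ j)) := by
  induction j with
  | zero => simpa [ha] using tendsto_const_nhds
  | succ j ih =>
    rw [pow_succ']
    refine (((tendsto_add_atTop_iff_nat j).2 hratio).mul ih).congr fun n => ?_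
    exact div_mul_div_cancel₀ (ha _)

theorem tendsto_centralBinom_succ_div :
    Tendsto (fun n : ℕ => ((n + 1).centralBinom : ℝ) / n.centralBinom) atTop (nhds 4) := by
  have hlin := tendsto_add_mul_div_add_mul_atTop_nhds (2 : ℝ) 1 4 one_ne_zero
  rw [div_one] at hlin
  refine hlin.congr fun n => ?_
  have hrec : ((n : ℝ) + 1) * (n + 1).centralBinom = 2 * (2 * n + 1) * n.centralBinom :=
    mod_cast Nat.succ_mul_centralBinom_succ n
  have hpos : (n.centralBinom : ℝ) ≠ 0 := mod_cast n.centralBinom_ne_zero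
  rw [div_eq_div_iff (by positivity) hpos]
  linear_combination -hrec

end Asymptotics

/-- the expected number of (RVarLift)-redexes (subterms (succ m)[⇑(s)])
per size n tends to 1/384. -/
theorem stmt18 :
    Tendsto (fun n : ℕ => expectTm Tm.rvarLiftCount n / (n : ℝ)) atTop (nhds (1 / 384)) := by
  rw [← tendsto_add_atTop_iff_nat 4]
  set a : ℕ → ℝ := fun k => (k + 1).centralBinom
  have ha_pos (k : ℕ) : 0 < a k := Nat.cast_pos.2 (k + 1).centralBinom_pos
  have hratio : Tendsto (fun k => a (k + 1) / a k) atTop (nhds 4) :=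
    (tendsto_add_atTop_iff_nat 1).2 tendsto_centralBinom_succ_div
  have hsum := tendsto_sum_range_div_of_tendsto_ratio ha_pos (by norm_num) hratio
  have hshift := tendsto_div_of_tendsto_ratio (fun k => (ha_pos k).ne') hratio 3
  have hlin := tendsto_add_mul_div_add_mul_atTop_nhds (5 : ℝ) 8 1 two_ne_zero
  have hlim := (hsum.div hshift (by norm_num)).mul hlin
  rw [show ((4 : ℝ) - 1)⁻¹ / 4 ^ 3 * (1 / 2) = 1 / 384 by norm_num] at hlim
  refine hlim.congr fun m => ?_
  rw [expectTm_rvarLiftCount, Pi.div_apply, div_div_div_cancel_right₀ (ha_pos m).ne']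
  push_cast
  field_simp
  ring
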